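/- Anti-concentration of shifted Gaussian quadratic forms with removed diagonal: for every ζ ∈ (0,1) and c > 0 there exists a constant C (depending only on ζ and c) such that for every n, every symmetric real n×n matrix P with zero diagonal and K := Σ_{i≠j} P_{ij}² > 0, all real numbers σ₁,…,σ_n with σ_i² ≥ c for every i, every μ ∈ ℝⁿ, and every t > 0: sup_{y ∈ ℝ} P( | Σ_{i≠j} (g_i σ_i + μ_i) P_{ij} (g_j σ_j + μ_j) / √K − y | ≤ t ) ≤ C · t^{(1−ζ)/2}, where g₁,…,g_n are i.i.d. standard normal random variables. -/

import Mathlib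

/-!
Anti-concentration by symmetrization. Put `α = 1 - ζ`, let `q` be the unnormalized form, and let
`S` be the event whose probability `p` is to be bounded.

For independent standard Gaussian vectors `x, x'` we have
`p² = ℙ(x ∈ S, x' ∈ S) ≤ ℙ(|q x - q x'| ≤ 2 t √K)`. The pair `v = (x - x')/√2`, `u = (x + x')/√2`
is again a pair of independent standard Gaussian vectors (rotation invariance), and since `P` is
symmetric, `q x - q x' = 2 ⟪L u, v⟫` with the affine map
`(L u)_j = ⟪a_j, u⟫ + m_j`, `a_j = (σ_j P_{ji} σ_i)_i`. Conditionally on `u` this is a centred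
Gaussian in `v`, so with `B = t √K` the conditional probability is at most
`min (1, 2 B / ‖L u‖) ≤ (8 B² / (4 B² + ‖L u‖²)) ^ (α / 2)` (`stdGaussian_smallBall`).

It remains to bound `𝔼 (b + ‖L u‖²) ^ (-α / 2)` with `b = 4 B²`
(`lintegral_stdGaussian_neg_moment`). With `F² = ∑ ‖a_j‖²` and weights `w_j = ‖a_j‖² / F²`, we have
`‖L u‖² = ∑ w_j F² Z_j²`, where each `Z_j` has law `N(m_j / ‖a_j‖, 1)`. Convexity of
`x ↦ x ^ (-α / 2)` (`rpow_neg_le_sum`) reduces the bound to one coordinate, where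
`𝔼 |Z_j| ^ (-α)` is bounded uniformly in the mean because the density is at most `1` and
`|z| ^ (-α)` is integrable near `0` for `α < 1`. No diagonalization is needed. Finally
`F² ≥ c² K`, so `p²` is at most a constant times `(t / c) ^ α`.
-/

open MeasureTheory ProbabilityTheory

/-- The law of `n` i.i.d. standard normal random variables `g₁, …, g_n`, realized canonically as
the product of `n` copies of the standard Gaussian measure on `ℝ`. -/
noncomputable def stdGaussianPi (n : ℕ) : Measure (Fin n → ℝ) :=
  Measure.pi fun _ => gaussianReal 0 1

lemma gaussianReal_le_volume (m : ℝ) : gaussianReal m 1 ≤ volume := by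
  rw [gaussianReal_of_var_ne_zero _ one_ne_zero]
  conv_rhs => rw [← withDensity_one (μ := (volume : Measure ℝ))]
  refine withDensity_mono (ae_of_all _ fun x => ?_)
  rw [gaussianPDF_def]
  simp only [Pi.one_apply, ENNReal.ofReal_le_one, gaussianPDFReal]
  have h1 : (√(2 * Real.pi * ((1 : NNReal) : ℝ)))⁻¹ ≤ 1 := by
    apply inv_le_one_of_one_le₀
    rw [Real.one_le_sqrt]
    have := Real.pi_gt_three
    simp; linarith
  have h2 : Real.exp (-(x - m) ^ 2 / (2 * ((1 : NNReal) : ℝ))) ≤ 1 := by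
    rw [Real.exp_le_one_iff]
    have := sq_nonneg (x - m)
    simp; linarith
  exact mul_le_one₀ h1 (Real.exp_pos _).le h2

/-- Jensen's inequality for the convex decreasing function `x ↦ x ^ (-p)`, with an upper bound `X`
for the weighted mean in place of the mean itself. -/
lemma rpow_neg_le_sum {ι : Type*} [Fintype ι] {p X : ℝ} (hp : 0 < p) (hX : 0 < X)
    (w x : ι → ℝ) (hw : ∀ j, 0 ≤ w j) (hw1 : ∑ j, w j = 1) (hx : ∀ j, 0 < x j)
    (h : ∑ j, w j * x j ≤ X) : X ^ (-p) ≤ ∑ j, w j * x j ^ (-p) := by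
  have key : ∀ j, X ^ (-p) * (w j - p * (w j * x j / X - w j)) ≤ w j * x j ^ (-p) := by
    intro j
    have hy : 0 < x j / X := div_pos (hx j) hX
    -- Tangent line of `y ↦ y ^ (-p)` at `y = 1`.
    have h1 : 1 - p * (x j / X - 1) ≤ (x j / X) ^ (-p) := by
      rw [Real.rpow_def_of_pos hy]
      have := Real.add_one_le_exp (Real.log (x j / X) * -p)
      have := Real.log_le_sub_one_of_pos hy
      nlinarith
    have h2 : x j ^ (-p) = X ^ (-p) * (x j / X) ^ (-p) := by
      rw [← Real.mul_rpow hX.le hy.le, mul_div_cancel₀ _ hX.ne']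
    rw [h2, mul_left_comm]
    refine mul_le_mul_of_nonneg_left ?_ (by positivity)
    have := mul_le_mul_of_nonneg_left h1 (hw j)
    refine le_trans (le_of_eq ?_) this
    ring
  refine le_trans ?_ (Finset.sum_le_sum fun j _ => key j)
  rw [← Finset.mul_sum, Finset.sum_sub_distrib, ← Finset.mul_sum, Finset.sum_sub_distrib,
    ← Finset.sum_div, hw1]
  have h3 : (∑ j, w j * x j) / X ≤ 1 := (div_le_one hX).2 h
  have h4 : 0 < X ^ (-p) := by positivity
  have : 0 ≤ p * (1 - (∑ j, w j * x j) / X) := mul_nonneg hp.le (by linarith)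
  nlinarith

/-- A bound, uniform in `m`, for `𝔼 |Z| ^ (-α)` with `Z ∼ N(m, 1)`: the `1` accounts for `|Z| > 1`,
the integral for `|Z| ≤ 1`. It takes values in `ℝ≥0∞`, and is finite for `α < 1`. -/
noncomputable def negMomentBound (α : ℝ) : ENNReal :=
  1 + ∫⁻ z in Set.Icc (-1 : ℝ) 1, ENNReal.ofReal (|z| ^ (-α))

lemma negMomentBound_lt_top {α : ℝ} (hα : α < 1) : negMomentBound α < ⊤ := by
  have h01 : IntervalIntegrable (fun z : ℝ => |z| ^ (-α)) volume 0 1 := by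
    refine (intervalIntegral.intervalIntegrable_rpow' (r := -α) (by linarith)).congr ?_
    intro z hz
    rw [Set.uIoc_of_le zero_le_one] at hz
    simp [abs_of_pos hz.1]
  have h10 : IntervalIntegrable (fun z : ℝ => |z| ^ (-α)) volume (-1) 0 := by
    have := (h01.comp_mul_left (c := -1)).symm
    simpa using this
  have h := (intervalIntegrable_iff_integrableOn_Icc_of_le (by norm_num)).1 (h10.trans h01)
  refine ENNReal.add_lt_top.2 ⟨ENNReal.one_lt_top, ?_⟩
  have := h.2
  rw [hasFiniteIntegral_iff_ofReal (ae_of_all _ fun z => by positivity)] at this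
  exact this

/-- The regularization `b > 0` keeps the negative power bounded; the estimate does not depend on `b`
or on the mean `m`. -/
lemma lintegral_gaussianReal_neg_moment {α b F : ℝ} (hα : 0 < α) (hb : 0 < b) (hF : 0 < F) (m : ℝ) :
    ∫⁻ z, ENNReal.ofReal ((b + F ^ 2 * z ^ 2) ^ (-(α / 2))) ∂(gaussianReal m 1) ≤
      ENNReal.ofReal (F ^ (-α)) * negMomentBound α := by
  have hac : gaussianReal m 1 ≪ volume := Measure.absolutelyContinuous_of_le (gaussianReal_le_volume m)
  have h0 : ∀ᵐ z ∂(gaussianReal m 1), z ≠ 0 := hac.ae_le (Measure.ae_ne volume 0)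
  have hmeas : Measurable fun z : ℝ => ENNReal.ofReal (|z| ^ (-α)) := by fun_prop
  calc _ ≤ ∫⁻ z, ENNReal.ofReal (F ^ (-α)) *
        (1 + (Set.Icc (-1 : ℝ) 1).indicator (fun z => ENNReal.ofReal (|z| ^ (-α))) z)
          ∂(gaussianReal m 1) := by
        refine lintegral_mono_ae ?_
        filter_upwards [h0] with z hz
        have hz' : 0 < |z| := abs_pos.2 hz
        have h1 : (b + F ^ 2 * z ^ 2) ^ (-(α / 2)) ≤ F ^ (-α) * |z| ^ (-α) := by
          rw [← Real.mul_rpow hF.le hz'.le]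
          have : (F * |z|) ^ (-α) = (F ^ 2 * z ^ 2) ^ (-(α / 2)) := by
            rw [← sq_abs z, ← mul_pow, ← Real.rpow_natCast, ← Real.rpow_mul (by positivity)]
            congr 1; push_cast; ring
          rw [this]
          exact Real.rpow_le_rpow_of_nonpos (by positivity) (by linarith) (by linarith)
        refine (ENNReal.ofReal_le_ofReal h1).trans ?_
        rw [ENNReal.ofReal_mul (by positivity)]
        gcongr
        by_cases hz1 : z ∈ Set.Icc (-1 : ℝ) 1
        · rw [Set.indicator_of_mem hz1]; exact le_add_self
        · rw [Set.indicator_of_notMem hz1, add_zero, ENNReal.ofReal_le_one]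
          have : 1 ≤ |z| := by
            by_contra! h
            exact hz1 ⟨(abs_lt.1 h).1.le, (abs_lt.1 h).2.le⟩
          exact Real.rpow_le_one_of_one_le_of_nonpos this (by linarith)
    _ ≤ _ := by
        rw [lintegral_const_mul _ (by measurability), lintegral_add_left measurable_const]
        unfold negMomentBound
        rw [← lintegral_indicator measurableSet_Icc]
        refine mul_le_mul_right (add_le_add (by simp) ?_) _
        exact lintegral_mono' (gaussianReal_le_volume m) le_rfl

section
variable {E : Type*} [NormedAddCommGroup E] [InnerProductSpace ℝ E] [FiniteDimensional ℝ E]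
  [MeasurableSpace E] [BorelSpace E]

lemma map_inner_stdGaussian {a : E} (ha : ‖a‖ = 1) (m : ℝ) :
    (stdGaussian E).map (fun x => inner ℝ a x + m) = gaussianReal m 1 := by
  have h1 : (stdGaussian E).map (innerSL ℝ a) = gaussianReal 0 1 := by
    rw [IsGaussian.map_eq_gaussianReal, integral_strongDual_stdGaussian, variance_dual_stdGaussian]
    simp [ha]
  have h2 := gaussianReal_map_add_const (μ := 0) (v := 1) m
  rw [← h1, Measure.map_map (by fun_prop) (by fun_prop), zero_add] at h2
  exact h2

/-- Small ball estimate for a centred Gaussian variable of standard deviation `‖a‖`. The right-hand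
side dominates `min (1, 2 B / ‖a‖)`, stays finite at `a = 0`, and is a convex function of `‖a‖²`. -/
lemma stdGaussian_smallBall {α B : ℝ} (hα : 0 < α) (hα1 : α ≤ 1) (hB : 0 < B) (a : E) :
    (stdGaussian E) {v | |inner ℝ a v| ≤ B} ≤
      ENNReal.ofReal ((8 * B ^ 2) ^ (α / 2) * (4 * B ^ 2 + ‖a‖ ^ 2) ^ (-(α / 2))) := by
  have hden : 0 < 4 * B ^ 2 + ‖a‖ ^ 2 := by positivity
  have hR : (8 * B ^ 2) ^ (α / 2) * (4 * B ^ 2 + ‖a‖ ^ 2) ^ (-(α / 2)) =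
      (8 * B ^ 2 / (4 * B ^ 2 + ‖a‖ ^ 2)) ^ (α / 2) := by
    rw [Real.rpow_neg hden.le, Real.div_rpow (by positivity) hden.le]
    exact (div_eq_mul_inv _ _).symm
  rw [hR]
  rcases le_or_gt ‖a‖ (2 * B) with h | h
  · refine prob_le_one.trans ?_
    rw [ENNReal.one_le_ofReal]
    refine Real.one_le_rpow ?_ (by positivity)
    rw [one_le_div hden]
    nlinarith [norm_nonneg a]
  · have ha : 0 < ‖a‖ := by linarith
    have hu : ‖(‖a‖⁻¹ • a)‖ = 1 := by
      rw [norm_smul, norm_inv, norm_norm, inv_mul_cancel₀ ha.ne']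
    have hset : {v : E | |inner ℝ a v| ≤ B} =
        (fun x => inner ℝ (‖a‖⁻¹ • a) x + 0) ⁻¹' Set.Icc (-(B / ‖a‖)) (B / ‖a‖) := by
      ext v
      simp only [Set.mem_ofPred_eq, Set.mem_preimage, add_zero, Set.mem_Icc, ← abs_le]
      rw [real_inner_smul_left, abs_mul, abs_inv, abs_norm, inv_mul_eq_div,
        div_le_div_iff_of_pos_right ha]
    rw [hset, ← Measure.map_apply (by fun_prop) measurableSet_Icc, map_inner_stdGaussian hu]
    refine (gaussianReal_le_volume 0 _).trans ?_
    rw [Real.volume_Icc]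
    refine ENNReal.ofReal_le_ofReal ?_
    have h1 : B / ‖a‖ - -(B / ‖a‖) = 2 * B / ‖a‖ := by ring
    rw [h1]
    have h2 : 2 * B / ‖a‖ ≤ 1 := (div_le_one ha).2 h.le
    have h3 : 2 * B / ‖a‖ ≤ (2 * B / ‖a‖) ^ α := by
      conv_lhs => rw [← Real.rpow_one (2 * B / ‖a‖)]
      exact Real.rpow_le_rpow_of_exponent_ge (by positivity) h2 hα1
    refine h3.trans ?_
    have h4 : (2 * B / ‖a‖) ^ α = ((2 * B / ‖a‖) ^ 2) ^ (α / 2) := by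
      rw [← Real.rpow_natCast, ← Real.rpow_mul (by positivity)]
      congr 1; push_cast; ring
    rw [h4]
    refine Real.rpow_le_rpow (by positivity) ?_ (by positivity)
    rw [div_pow, div_le_div_iff₀ (by positivity) hden]
    nlinarith [mul_pos (mul_pos hB hB) (mul_pos (sub_pos.2 h) (by linarith : 0 < ‖a‖ + 2 * B))]

/-- Negative moment of a Gaussian vector with coordinates `⟪a j, u⟫ + m j`: Jensen's inequality with
weights `‖a j‖² / F²` reduces it to `lintegral_gaussianReal_neg_moment`. -/
lemma lintegral_stdGaussian_neg_moment {ι : Type*} [Fintype ι] {α b F : ℝ} (hα : 0 < α)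
    (hb : 0 < b) (hF : 0 < F) (a : ι → E) (m : ι → ℝ) (hFa : F ^ 2 = ∑ j, ‖a j‖ ^ 2) :
    ∫⁻ u, ENNReal.ofReal ((b + ∑ j, (inner ℝ (a j) u + m j) ^ 2) ^ (-(α / 2))) ∂(stdGaussian E) ≤
      ENNReal.ofReal (F ^ (-α)) * negMomentBound α := by
  set w : ι → ℝ := fun j => ‖a j‖ ^ 2 / F ^ 2 with hw
  have hw0 : ∀ j, 0 ≤ w j := fun j => by positivity
  have hw1 : ∑ j, w j = 1 := by
    rw [hw, ← Finset.sum_div, ← hFa, div_self (by positivity)]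
  calc _ ≤ ∫⁻ u, ∑ j, ENNReal.ofReal (w j) *
        ENNReal.ofReal ((b + (inner ℝ (a j) u + m j) ^ 2 / w j) ^ (-(α / 2))) ∂(stdGaussian E) := by
        refine lintegral_mono fun u => ?_
        simp only [← ENNReal.ofReal_mul (hw0 _)]
        rw [← ENNReal.ofReal_sum_of_nonneg fun j _ => by have := hw0 j; positivity]
        refine ENNReal.ofReal_le_ofReal ?_
        refine rpow_neg_le_sum (by positivity) ?_ w _ hw0 hw1 (fun j => ?_) ?_
        · have : 0 ≤ ∑ j, (inner ℝ (a j) u + m j) ^ 2 := Finset.sum_nonneg fun j _ => sq_nonneg _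
          linarith
        · have := hw0 j; positivity
        · simp only [mul_add, Finset.sum_add_distrib, ← Finset.sum_mul, hw1, one_mul]
          gcongr with j
          -- If `w j = 0`, the division by `w j` gives `0` and the term on the left vanishes.
          rcases (hw0 j).eq_or_lt with h | h
          · rw [← h, zero_mul]; positivity
          · rw [mul_div_cancel₀ _ h.ne']
    _ = ∑ j, ENNReal.ofReal (w j) * ∫⁻ u,
        ENNReal.ofReal ((b + (inner ℝ (a j) u + m j) ^ 2 / w j) ^ (-(α / 2))) ∂(stdGaussian E) := by
        rw [lintegral_finsetSum _ fun j _ => by fun_prop]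
        refine Finset.sum_congr rfl fun j _ => ?_
        rw [lintegral_const_mul _ (by fun_prop)]
    _ ≤ ∑ j, ENNReal.ofReal (w j) * (ENNReal.ofReal (F ^ (-α)) * negMomentBound α) := by
        refine Finset.sum_le_sum fun j _ => ?_
        rcases eq_or_ne (a j) 0 with h | h
        · simp [hw, h]
        gcongr
        have ha : 0 < ‖a j‖ := norm_pos_iff.2 h
        have hu : ‖(‖a j‖⁻¹ • a j)‖ = 1 := by
          rw [norm_smul, norm_inv, norm_norm, inv_mul_cancel₀ ha.ne']
        refine le_trans (le_of_eq ?_)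
          (lintegral_gaussianReal_neg_moment hα hb hF (m j / ‖a j‖))
        rw [← map_inner_stdGaussian hu, lintegral_map (by fun_prop) (by fun_prop)]
        refine lintegral_congr fun u => ?_
        congr 3
        rw [real_inner_smul_left]
        simp only [hw]
        field_simp
    _ = _ := by
        rw [← Finset.sum_mul, ← ENNReal.ofReal_sum_of_nonneg fun j _ => hw0 j, hw1]
        simp
end

/-- Anti-concentration at `0` of the decoupled form `⟪L u, v⟫`, where `p = (v, u)` and
`(L u)_j = ⟪a j, u⟫ + m j`: the small ball estimate in `v` for fixed `u`, integrated over `u`. -/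
lemma prod_stdGaussian_bilinear_le {n : ℕ} {α B F : ℝ} (hα : 0 < α) (hα1 : α ≤ 1)
    (hB : 0 < B) (hF : 0 < F) (a : Fin n → EuclideanSpace ℝ (Fin n)) (m : Fin n → ℝ)
    (hFa : F ^ 2 = ∑ j, ‖a j‖ ^ 2) :
    ((stdGaussian (EuclideanSpace ℝ (Fin n))).prod (stdGaussian (EuclideanSpace ℝ (Fin n))))
      {p | |∑ j, (inner ℝ (a j) p.2 + m j) * p.1 j| ≤ B} ≤
      ENNReal.ofReal ((8 * B ^ 2) ^ (α / 2) * F ^ (-α)) * negMomentBound α := by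
  have hmeas : MeasurableSet {p : EuclideanSpace ℝ (Fin n) × EuclideanSpace ℝ (Fin n) |
      |∑ j, (inner ℝ (a j) p.2 + m j) * p.1 j| ≤ B} :=
    measurableSet_le (by fun_prop) measurable_const
  rw [Measure.prod_apply_symm hmeas]
  calc _ ≤ ∫⁻ u, ENNReal.ofReal ((8 * B ^ 2) ^ (α / 2)) * ENNReal.ofReal
        ((4 * B ^ 2 + ∑ j, (inner ℝ (a j) u + m j) ^ 2) ^ (-(α / 2)))
          ∂(stdGaussian (EuclideanSpace ℝ (Fin n))) := by
        refine lintegral_mono fun u => ?_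
        rw [← ENNReal.ofReal_mul (by positivity)]
        have h := stdGaussian_smallBall hα hα1 hB
          (WithLp.toLp 2 fun j => inner ℝ (a j) u + m j : EuclideanSpace ℝ (Fin n))
        rw [EuclideanSpace.real_norm_sq_eq] at h
        refine le_trans (le_of_eq ?_) h
        congr 1
        ext v
        simp [PiLp.inner_apply, mul_comm]
    _ ≤ _ := by
        rw [lintegral_const_mul _ (by fun_prop), ENNReal.ofReal_mul (by positivity), mul_assoc]
        gcongr
        exact lintegral_stdGaussian_neg_moment hα (by positivity) hF a m hFa

/-- Polarization: for a symmetric matrix the difference of the form at two points is bilinear in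
their sum and their difference. -/
lemma shifted_form_sub {n : ℕ} {P : Matrix (Fin n) (Fin n) ℝ} (hP : P.IsSymm)
    (σ μv x x' : Fin n → ℝ) :
    (∑ i, ∑ j, (x i * σ i + μv i) * P i j * (x j * σ j + μv j)) -
      (∑ i, ∑ j, (x' i * σ i + μv i) * P i j * (x' j * σ j + μv j)) =
    ∑ j, ∑ i, (x i * σ i + x' i * σ i + 2 * μv i) * P j i * (σ j * (x j - x' j)) := by
  have hcross : ∑ i, ∑ j, (x i * σ i + μv i) * P i j * (x' j * σ j + μv j) =
      ∑ i, ∑ j, (x' i * σ i + μv i) * P i j * (x j * σ j + μv j) := by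
    rw [Finset.sum_comm]
    refine Finset.sum_congr rfl fun i _ => Finset.sum_congr rfl fun j _ => ?_
    rw [hP.apply i j]; ring
  have h : ∑ j, ∑ i, (x i * σ i + x' i * σ i + 2 * μv i) * P j i * (σ j * (x j - x' j)) =
      (∑ i, ∑ j, (x i * σ i + μv i) * P i j * (x j * σ j + μv j)) -
      (∑ i, ∑ j, (x i * σ i + μv i) * P i j * (x' j * σ j + μv j)) +
      (∑ i, ∑ j, (x' i * σ i + μv i) * P i j * (x j * σ j + μv j)) -
      (∑ i, ∑ j, (x' i * σ i + μv i) * P i j * (x' j * σ j + μv j)) := by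
    rw [Finset.sum_comm]
    simp only [← Finset.sum_sub_distrib, ← Finset.sum_add_distrib]
    refine Finset.sum_congr rfl fun i _ => Finset.sum_congr rfl fun j _ => ?_
    rw [hP.apply i j]; ring
  rw [h, hcross]; ring

lemma stdGaussianPi_apply {n : ℕ} {S : Set (Fin n → ℝ)} :
    stdGaussianPi n S = stdGaussian (EuclideanSpace ℝ (Fin n)) {x | x.ofLp ∈ S} := by
  rw [← map_pi_eq_stdGaussian]
  have := (MeasurableEquiv.toLp 2 (Fin n → ℝ)).map_apply (μ := stdGaussianPi n)
    {x : EuclideanSpace ℝ (Fin n) | x.ofLp ∈ S}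
  exact this.symm

/-- The squared bound, for the form with the diagonal terms written out. Squaring the probability
amounts to introducing an independent copy. -/
lemma sq_measure_level_le {n : ℕ} {α c t y : ℝ} (hα : 0 < α) (hα1 : α ≤ 1) (hc : 0 < c)
    (ht : 0 < t) {P : Matrix (Fin n) (Fin n) ℝ} (hP : P.IsSymm) (σ μv : Fin n → ℝ)
    (hσ : ∀ i, c ≤ σ i ^ 2) (hK : 0 < ∑ i, ∑ j, P i j ^ 2) :
    (stdGaussianPi n {x | |(∑ i, ∑ j, (x i * σ i + μv i) * P i j * (x j * σ j + μv j)) /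
        √(∑ i, ∑ j, P i j ^ 2) - y| ≤ t}) ^ 2 ≤
      ENNReal.ofReal ((8 : ℝ) ^ (α / 2) * c ^ (-α) * t ^ α) * negMomentBound α := by
  set K := ∑ i, ∑ j, P i j ^ 2 with hKdef
  have hs : 0 < √K := Real.sqrt_pos.2 hK
  set G := stdGaussian (EuclideanSpace ℝ (Fin n))
  set a : Fin n → EuclideanSpace ℝ (Fin n) := fun j => WithLp.toLp 2 fun i => σ j * P j i * σ i
    with ha
  set m : Fin n → ℝ := fun j => ∑ i, σ j * P j i * (√2 * μv i) with hm
  have hsum : c ^ 2 * K ≤ ∑ j, ‖a j‖ ^ 2 := by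
    simp only [ha, EuclideanSpace.real_norm_sq_eq, hKdef, Finset.mul_sum]
    refine Finset.sum_le_sum fun j _ => Finset.sum_le_sum fun i _ => ?_
    have h1 : c ^ 2 ≤ σ j ^ 2 * σ i ^ 2 := by
      rw [sq]; exact mul_le_mul (hσ j) (hσ i) hc.le (sq_nonneg _)
    calc c ^ 2 * P j i ^ 2 ≤ σ j ^ 2 * σ i ^ 2 * P j i ^ 2 := by gcongr
      _ = _ := by ring
  set F := √(∑ j, ‖a j‖ ^ 2) with hF
  have hF2 : F ^ 2 = ∑ j, ‖a j‖ ^ 2 := Real.sq_sqrt (Finset.sum_nonneg fun j _ => sq_nonneg _)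
  have hcF : c * √K ≤ F := by
    refine Real.le_sqrt_of_sq_le ?_
    rwa [mul_pow, Real.sq_sqrt hK.le]
  have hcK : 0 < c * √K := mul_pos hc hs
  have hF0 : 0 < F := hcK.trans_le hcF
  set q : (Fin n → ℝ) → ℝ := fun x => ∑ i, ∑ j, (x i * σ i + μv i) * P i j * (x j * σ j + μv j)
    with hq
  rw [stdGaussianPi_apply, sq, ← Measure.prod_prod]
  have hrot : (G.prod G).map (ContinuousLinearMap.rotation (-(Real.pi / 4))) = G.prod G :=
    IsGaussian.map_rotation_eq_self (by simpa using integral_id_stdGaussian) _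
  have hmeas : MeasurableSet {p : EuclideanSpace ℝ (Fin n) × EuclideanSpace ℝ (Fin n) |
      |∑ j, (inner ℝ (a j) p.2 + m j) * p.1 j| ≤ t * √K} :=
    measurableSet_le (by fun_prop) measurable_const
  -- Rotation by `-π/4` sends `(x, x')` to `((x - x')/√2, (x + x')/√2) = (v, u)`.
  calc _ ≤ (G.prod G) (ContinuousLinearMap.rotation (-(Real.pi / 4)) ⁻¹'
        {p | |∑ j, (inner ℝ (a j) p.2 + m j) * p.1 j| ≤ t * √K}) := by
        refine measure_mono ?_
        rintro ⟨x, x'⟩ ⟨hx, hx'⟩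
        simp only [Set.mem_ofPred_eq] at hx hx'
        have hid : q x - q x' = 2 * ∑ j, (inner ℝ (a j)
            (ContinuousLinearMap.rotation (-(Real.pi / 4)) (x, x')).2 + m j) *
            (ContinuousLinearMap.rotation (-(Real.pi / 4)) (x, x')).1 j := by
          rw [hq, shifted_form_sub hP, Finset.mul_sum]
          refine Finset.sum_congr rfl fun j _ => ?_
          simp only [ha, hm, ContinuousLinearMap.rotation_apply, PiLp.inner_apply,
            ← Finset.sum_add_distrib, Finset.sum_mul, Finset.mul_sum]
          refine Finset.sum_congr rfl fun i _ => ?_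
          have h2 : √2 * √2 = (2 : ℝ) := Real.mul_self_sqrt (by norm_num)
          simp
          linear_combination (-(σ j * P j i * (x j - x' j)) *
            ((x i + x' i) * σ i / 2 + μv i)) * h2
        rw [Set.mem_preimage, Set.mem_ofPred_eq]
        have hd : |q x - q x'| ≤ 2 * (t * √K) := by
          have h3 : q x - q x' = √K * ((q x / √K - y) - (q x' / √K - y)) := by
            field_simp; ring
          rw [h3, abs_mul, abs_of_pos hs]
          have h4 : |(q x / √K - y) - (q x' / √K - y)| ≤ 2 * t := by
            have h5 := abs_le.1 hx
            have h6 := abs_le.1 hx'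
            exact abs_le.2 ⟨by linarith [h5.1, h6.2], by linarith [h5.2, h6.1]⟩
          calc _ ≤ √K * (2 * t) := by gcongr
            _ = _ := by ring
        rw [hid, abs_mul, abs_two] at hd
        linarith
    _ = (G.prod G) {p | |∑ j, (inner ℝ (a j) p.2 + m j) * p.1 j| ≤ t * √K} := by
        rw [← Measure.map_apply (by fun_prop) hmeas, hrot]
    _ ≤ _ := prod_stdGaussian_bilinear_le hα hα1 (mul_pos ht hs) hF0 a m hF2
    _ ≤ _ := by
        refine mul_le_mul_left (ENNReal.ofReal_le_ofReal ?_) _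
        have h1 : (8 * (t * √K) ^ 2) ^ (α / 2) = 8 ^ (α / 2) * (t * √K) ^ α := by
          rw [Real.mul_rpow (by norm_num) (by positivity), ← Real.rpow_natCast,
            ← Real.rpow_mul (by positivity)]
          congr 2; push_cast; ring
        have h2 : F ^ (-α) ≤ (c * √K) ^ (-α) :=
          Real.rpow_le_rpow_of_nonpos hcK hcF (by linarith)
        calc _ ≤ 8 ^ (α / 2) * (t * √K) ^ α * (c * √K) ^ (-α) := by rw [h1]; gcongr
          _ = _ := by
            rw [Real.mul_rpow ht.le hs.le, Real.mul_rpow hc.le hs.le, Real.rpow_neg hs.le]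
            have : √K ^ α ≠ 0 := (Real.rpow_pos_of_pos hs _).ne'
            field_simp

/-- **Anti-concentration of shifted Gaussian quadratic forms with removed diagonal.**
For every `ζ ∈ (0,1)` and `c > 0` there is a constant `C` (depending only on `ζ` and `c`) such
that for every `n`, every symmetric real `n × n` matrix `P` with zero diagonal and
`K := Σ_{i≠j} P_{ij}² > 0`, all reals `σ₁, …, σ_n` with `σ_i² ≥ c`, every `μ ∈ ℝⁿ` and every
`t > 0`,
`sup_{y} P(|Σ_{i≠j} (g_i σ_i + μ_i) P_{ij} (g_j σ_j + μ_j)/√K − y| ≤ t) ≤ C t^((1−ζ)/2)`,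
where `g₁, …, g_n` are i.i.d. standard normal. -/
theorem stmt_5 (ζ : ℝ) (hζ : ζ ∈ Set.Ioo (0 : ℝ) 1) (c : ℝ) (hc : 0 < c) :
    ∃ C : ℝ, 0 < C ∧
      ∀ (n : ℕ) (P : Matrix (Fin n) (Fin n) ℝ), P.IsSymm → (∀ i, P i i = 0) →
        ∀ (σ μv : Fin n → ℝ),
          0 < ∑ i, ∑ j, (if i = j then 0 else (P i j) ^ 2) →
          (∀ i, c ≤ (σ i) ^ 2) →
          ∀ t : ℝ, 0 < t → ∀ y : ℝ,
            ((stdGaussianPi n)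
              {x : Fin n → ℝ |
                |(∑ i, ∑ j, if i = j then 0 else
                    (x i * σ i + μv i) * P i j * (x j * σ j + μv j)) /
                  Real.sqrt (∑ i, ∑ j, (if i = j then 0 else (P i j) ^ 2)) - y| ≤ t}).toReal ≤
              C * t ^ ((1 - ζ) / 2) := by
  obtain ⟨hζ0, hζ1⟩ := hζ
  set α := 1 - ζ with hα
  have hα0 : 0 < α := by linarith
  have hα1 : α ≤ 1 := by linarith
  set M := (negMomentBound α).toReal
  have hMtop : negMomentBound α ≠ ⊤ := (negMomentBound_lt_top (by linarith)).ne
  have hM : 0 < M := ENNReal.toReal_pos (by simp [negMomentBound]) hMtop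
  have hD : 0 < (8 : ℝ) ^ (α / 2) * c ^ (-α) * M := by positivity
  refine ⟨√((8 : ℝ) ^ (α / 2) * c ^ (-α) * M), Real.sqrt_pos.2 hD, ?_⟩
  intro n P hP hdiag σ μv hK hσ t ht y
  have e1 : ∀ i j, (if i = j then 0 else P i j ^ 2) = P i j ^ 2 := by
    intro i j; split_ifs with h
    · rw [h, hdiag]; simp
    · rfl
  have e2 : ∀ (x : Fin n → ℝ) i j, (if i = j then 0 else
      (x i * σ i + μv i) * P i j * (x j * σ j + μv j)) =
      (x i * σ i + μv i) * P i j * (x j * σ j + μv j) := by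
    intro x i j; split_ifs with h
    · rw [h, hdiag]; simp
    · rfl
  simp only [e1] at hK
  simp only [e1, e2]
  have h := sq_measure_level_le (y := y) hα0 hα1 hc ht hP σ μv hσ hK
  have h' := ENNReal.toReal_mono (ENNReal.mul_ne_top ENNReal.ofReal_ne_top hMtop) h
  rw [ENNReal.toReal_pow, ENNReal.toReal_mul, ENNReal.toReal_ofReal (by positivity)] at h'
  refine le_of_sq_le_sq ?_ (by positivity)
  rw [mul_pow, Real.sq_sqrt hD.le, ← Real.rpow_natCast (t ^ _), ← Real.rpow_mul ht.le]
  refine h'.trans (le_of_eq ?_)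
  have : α / 2 * ((2 : ℕ) : ℝ) = α := by push_cast; ring
  rw [this]; ring
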